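/- Assume the local setting. Let G(x) be a μ×μ matrix with entries in K_v(x) such that |G(x)|_{v,Gauss} ≤ 1, define G_n and χ_v as usual, and let n ≥ 1 be an integer such that |G_{n·κ_v}(x)|_{v,Gauss} ≤ |[κ_v]_q|_v (unipotent reduction of order n modulo 1 − q^{κ_v}). Then χ_v ≥ |[κ_v]_q|_v^{(n−1)/(n·κ_v)} · |p|_v^{1/(κ_v(p−1))}. -/

import Mathlib

open Filter
open scoped ENNReal

noncomputable section

variable {Kv : Type*} [NormedField Kv]

/-- `[n]_q = 1 + q + ⋯ + q^{n-1}`. -/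
def qNat (q : Kv) (n : ℕ) : Kv := ∑ i ∈ Finset.range n, q ^ i

/-- `[n]_q! = [1]_q ⋯ [n]_q`. -/
def qFactorial (q : Kv) : ℕ → Kv
  | 0 => 1
  | n + 1 => qFactorial q n * qNat q (n + 1)

/-- The Gaussian binomial coefficient `binom(n,i)_q`. -/
def qBinom (q : Kv) (n i : ℕ) : Kv := qFactorial q n / (qFactorial q i * qFactorial q (n - i))

/-- The substitution `x ↦ qx` on rational functions. -/
def ratSubst (q : Kv) (f : RatFunc Kv) : RatFunc Kv :=
  algebraMap (Polynomial Kv) (RatFunc Kv) (f.num.comp (Polynomial.C q * Polynomial.X)) /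
    algebraMap (Polynomial Kv) (RatFunc Kv) (f.denom.comp (Polynomial.C q * Polynomial.X))

/-- The `q`-difference operator `d_q f(x) = (f(qx) - f(x))/((q-1)x)`. -/
def qDeriv (q : Kv) (f : RatFunc Kv) : RatFunc Kv :=
  (ratSubst q f - f) / (RatFunc.C (q - 1) * RatFunc.X)

/-- The Gauss norm of a polynomial: the sup of the norms of its coefficients. -/
def polyGaussNorm (P : Polynomial Kv) : ℝ := ⨆ i : ℕ, ‖P.coeff i‖

/-- The Gauss norm of a rational function. -/
def gaussNorm (f : RatFunc Kv) : ℝ := polyGaussNorm f.num / polyGaussNorm f.denom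

/-- The Gauss norm of a matrix of rational functions: max of the Gauss norms of the entries. -/
def matGaussNorm {μ : ℕ} (M : Matrix (Fin μ) (Fin μ) (RatFunc Kv)) : ℝ :=
  ⨆ i, ⨆ j, gaussNorm (M i j)

/-- The sequence of matrices `G_n`: `G_0 = 1`, `G_{n+1}(x) = G(x)·G_n(qx) + (d_q G_n)(x)`. -/
def Gseq {μ : ℕ} (q : Kv) (G : Matrix (Fin μ) (Fin μ) (RatFunc Kv)) :
    ℕ → Matrix (Fin μ) (Fin μ) (RatFunc Kv)
  | 0 => 1
  | n + 1 => G * (Gseq q G n).map (ratSubst q) + (Gseq q G n).map (qDeriv q)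

/-- `χ_v = min(1, liminf |G_n/[n]_q!|^{-1/n})`, computed in `ℝ≥0∞`. -/
def chiV {μ : ℕ} (q : Kv) (G : Matrix (Fin μ) (Fin μ) (RatFunc Kv)) : ℝ≥0∞ :=
  min 1 (Filter.liminf (fun n : ℕ =>
    (ENNReal.ofReal (matGaussNorm (Gseq q G n) / ‖qFactorial q n‖)) ^ (-(1 / (n : ℝ))))
    Filter.atTop)

/-!
Let `Δ F = G(x) F(qx) + d_q F`, so that `G_n = Δ^n 1`. The `q`-Leibniz rule expands `Δ^k (1 · F)`
into `G_k F` plus terms containing some `d_q^i F` with `0 < i ≤ k`; by the Cauchy estimate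
`|d_q^i F| ≤ |[i]_q!| |F|` and the divisibility of `binom(k,i)_q [i]_q!` by `[k]_q`, those terms
have norm at most `|[k]_q| |F|`. Unipotent reduction of order `n` therefore makes `Δ^{nκ}` contract
Gauss norms by the factor `s = |[κ]_q|`, whence `|G_N| ≤ s^⌊N/(nκ)⌋`. On the other hand
`|[N]_q!| = s^⌊N/κ⌋ |⌊N/κ⌋!|`, and Legendre's formula bounds the factorial from below by
`|p|^{⌊N/κ⌋/(p-1)}`. Taking `N`-th roots of the quotient gives the result.
-/

section QNumbers

variable {q : Kv}

lemma qNat_mul_sub_one (q : Kv) (m : ℕ) : qNat q m * (q - 1) = q ^ m - 1 := geom_sum_mul q m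

lemma qNat_zero (q : Kv) : qNat q 0 = 0 := Finset.sum_range_zero _

lemma qNat_one (q : Kv) : qNat q 1 = 1 := by simp [qNat]

lemma qNat_add (q : Kv) (a b : ℕ) : qNat q (a + b) = qNat q a + q ^ a * qNat q b := by
  simp only [qNat, Finset.sum_range_add, pow_add, Finset.mul_sum]

lemma qNat_mul (q : Kv) (k m : ℕ) : qNat q (k * m) = qNat q k * qNat (q ^ k) m := by
  induction m with
  | zero => simp only [mul_zero, qNat_zero]
  | succ m ih => rw [mul_add_one, qNat_add, qNat_add, ih, qNat_one, pow_mul]; ring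

lemma qNat_eq_sum_choose (q : Kv) (m : ℕ) :
    qNat q m = ∑ j ∈ Finset.range m, (m.choose (j + 1) : Kv) * (q - 1) ^ j := by
  simpa [qNat, Polynomial.eval_finsetSum] using
    congrArg (Polynomial.eval (q - 1)) (Polynomial.geom_sum_X_comp_X_add_one_eq_sum m)

lemma qNat_ne_zero (hq : ∀ m : ℕ, 0 < m → q ^ m ≠ 1) {m : ℕ} (hm : 0 < m) : qNat q m ≠ 0 := by
  intro h
  have := qNat_mul_sub_one q m
  rw [h, zero_mul, eq_comm, sub_eq_zero] at this
  exact hq m hm this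

lemma qFactorial_zero (q : Kv) : qFactorial q 0 = 1 := rfl

lemma qFactorial_succ (q : Kv) (k : ℕ) :
    qFactorial q (k + 1) = qFactorial q k * qNat q (k + 1) := rfl

lemma qFactorial_ne_zero (hq : ∀ m : ℕ, 0 < m → q ^ m ≠ 1) (k : ℕ) : qFactorial q k ≠ 0 := by
  induction k with
  | zero => exact one_ne_zero
  | succ k ih => exact mul_ne_zero ih (qNat_ne_zero hq k.succ_pos)

lemma qBinom_mul_qFactorial_mul_qFactorial (hq : ∀ m : ℕ, 0 < m → q ^ m ≠ 1) (k i : ℕ) :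
    qBinom q k i * (qFactorial q i * qFactorial q (k - i)) = qFactorial q k :=
  div_mul_cancel₀ _ (mul_ne_zero (qFactorial_ne_zero hq i) (qFactorial_ne_zero hq (k - i)))

lemma qBinom_zero_right (hq : ∀ m : ℕ, 0 < m → q ^ m ≠ 1) (k : ℕ) : qBinom q k 0 = 1 := by
  rw [qBinom, qFactorial_zero, one_mul, Nat.sub_zero, div_self (qFactorial_ne_zero hq k)]

lemma qBinom_self (hq : ∀ m : ℕ, 0 < m → q ^ m ≠ 1) (k : ℕ) : qBinom q k k = 1 := by
  rw [qBinom, Nat.sub_self, qFactorial_zero, mul_one, div_self (qFactorial_ne_zero hq k)]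

/- Since `k - (k + 1) = 0` in `ℕ`, `qBinom q k (k + 1)` is a junk value and not zero. -/
lemma qBinom_succ_succ (hq : ∀ m : ℕ, 0 < m → q ^ m ≠ 1) {k i : ℕ} (hi : i < k) :
    qBinom q (k + 1) (i + 1) = qBinom q k i + q ^ (i + 1) * qBinom q k (i + 1) := by
  obtain ⟨j, rfl⟩ := Nat.exists_eq_add_of_lt hi
  have hF := qFactorial_ne_zero hq
  have hi₀ := qNat_ne_zero hq i.succ_pos
  have hj₀ := qNat_ne_zero hq j.succ_pos
  have e₁ : i + j + 1 + 1 - (i + 1) = j + 1 := by omega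
  have e₂ : i + j + 1 - i = j + 1 := by omega
  have e₃ : i + j + 1 - (i + 1) = j := by omega
  have hsum : qNat q (i + j + 1 + 1) = qNat q (i + 1) + q ^ (i + 1) * qNat q (j + 1) := by
    rw [← qNat_add]; congr 1; omega
  simp only [qBinom, e₁, e₂, e₃, qFactorial_succ q (i + j + 1), qFactorial_succ q i,
    qFactorial_succ q j, hsum]
  field_simp [hF i, hF j]

end QNumbers

section QLeibniz

variable {A : Type*} [Ring A] [Algebra Kv A] {q : Kv} {Δ T d : A → A}

lemma map_iterate_of_qCommute (hT : ∀ (c : Kv) F, T (c • F) = c • T F)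
    (hcomm : ∀ F, Δ (T F) = q • T (Δ F)) (i : ℕ) (F : A) :
    Δ (T^[i] F) = q ^ i • T^[i] (Δ F) := by
  induction i with
  | zero => simp only [Function.iterate_zero_apply, pow_zero, one_smul]
  | succ i ih =>
    rw [Function.iterate_succ_apply', hcomm, ih, hT, smul_smul, ← pow_succ',
      Function.iterate_succ_apply']

theorem qLeibniz (hq : ∀ m : ℕ, 0 < m → q ^ m ≠ 1) (hΔ : IsLinearMap Kv Δ)
    (hT : ∀ (c : Kv) F, T (c • F) = c • T F)
    (hmul : ∀ F H, Δ (F * H) = Δ F * H + T F * d H) (hcomm : ∀ F, Δ (T F) = q • T (Δ F))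
    (k : ℕ) (F H : A) :
    Δ^[k] (F * H) =
      ∑ i ∈ Finset.range (k + 1), qBinom q k i • (T^[i] (Δ^[k - i] F) * d^[i] H) := by
  induction k with
  | zero => simp [qBinom_zero_right hq]
  | succ k ih =>
    let term (a b : ℕ) : A := T^[a] (Δ^[b] F) * d^[a] H
    have hterm (i : ℕ) (hi : i ≤ k) :
        Δ (term i (k - i)) = q ^ i • term i (k + 1 - i) + term (i + 1) (k - i) := by
      simp only [term, hmul, map_iterate_of_qCommute hT hcomm, smul_mul_assoc,
        ← Function.iterate_succ_apply', Nat.succ_sub hi]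
    have hstep : Δ^[k + 1] (F * H) =
        ∑ i ∈ Finset.range (k + 1), (q ^ i * qBinom q k i) • term i (k + 1 - i) +
          ∑ i ∈ Finset.range (k + 1), qBinom q k i • term (i + 1) (k - i) := by
      rw [Function.iterate_succ_apply', ih, ← hΔ.mk'_apply, map_sum, ← Finset.sum_add_distrib]
      refine Finset.sum_congr rfl fun i hi => ?_
      rw [map_smul, hΔ.mk'_apply, hterm i (Finset.mem_range_succ_iff.mp hi), smul_add, smul_smul,
        mul_comm]
    have hpascal : ∑ i ∈ Finset.range k, qBinom q (k + 1) (i + 1) • term (i + 1) (k - i) =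
        ∑ i ∈ Finset.range k, (q ^ (i + 1) * qBinom q k (i + 1)) • term (i + 1) (k - i) +
          ∑ i ∈ Finset.range k, qBinom q k i • term (i + 1) (k - i) := by
      rw [← Finset.sum_add_distrib]
      refine Finset.sum_congr rfl fun i hi => ?_
      rw [qBinom_succ_succ hq (Finset.mem_range.mp hi), add_comm, add_smul]
    rw [hstep, Finset.sum_range_succ', Finset.sum_range_succ _ k, Finset.sum_range_succ' _ (k + 1),
      Finset.sum_range_succ _ k]
    simp only [Nat.add_sub_add_right, qBinom_self hq, qBinom_zero_right hq, pow_zero, one_mul]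
    change _ = ∑ i ∈ Finset.range k, qBinom q (k + 1) (i + 1) • term (i + 1) (k - i) + _ + _
    rw [hpascal]
    abel

end QLeibniz

section QNumberNorms

variable [IsUltrametricDist Kv] {q : Kv}

lemma norm_sub_one_le_one (hq : ‖q‖ ≤ 1) : ‖q - 1‖ ≤ 1 := by
  rw [sub_eq_add_neg]
  exact (IsUltrametricDist.norm_add_le_max q (-1)).trans (max_le hq (by rw [norm_neg, norm_one]))

lemma norm_qNat_le_one (hq : ‖q‖ ≤ 1) (k : ℕ) : ‖qNat q k‖ ≤ 1 :=
  IsUltrametricDist.norm_sum_le_of_forall_le_of_nonneg zero_le_one fun i _ => by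
    rw [norm_pow]; exact pow_le_one₀ (norm_nonneg q) hq

lemma antitone_norm_qFactorial (hq : ‖q‖ ≤ 1) : Antitone fun k => ‖qFactorial q k‖ :=
  antitone_nat_of_succ_le fun k => by
    rw [qFactorial_succ, norm_mul]
    exact mul_le_of_le_one_right (norm_nonneg _) (norm_qNat_le_one hq _)

lemma norm_qNat_mul_le (hq : ‖q‖ ≤ 1) (k m : ℕ) : ‖qNat q (k * m)‖ ≤ ‖qNat q k‖ := by
  rw [qNat_mul, norm_mul]
  refine mul_le_of_le_one_right (norm_nonneg _) (norm_qNat_le_one ?_ m)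
  rw [norm_pow]
  exact pow_le_one₀ (norm_nonneg q) hq

lemma norm_pow_sub_one_le (hq : ‖q‖ ≤ 1) (m : ℕ) : ‖q ^ m - 1‖ ≤ ‖q - 1‖ := by
  rw [← qNat_mul_sub_one, norm_mul]
  exact mul_le_of_le_one_left (norm_nonneg _) (norm_qNat_le_one hq m)

lemma norm_qBinom_mul_norm_qFactorial_le (hq : ‖q‖ ≤ 1) (hqru : ∀ m : ℕ, 0 < m → q ^ m ≠ 1)
    {k i : ℕ} (hi : i ≠ 0) (hik : i ≤ k) :
    ‖qBinom q k i‖ * ‖qFactorial q i‖ ≤ ‖qNat q k‖ := by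
  obtain ⟨l, rfl⟩ := Nat.exists_eq_succ_of_ne_zero (by omega : k ≠ 0)
  refine le_of_mul_le_mul_right ?_ (norm_pos_iff.mpr (qFactorial_ne_zero hqru (l + 1 - i)))
  calc ‖qBinom q (l + 1) i‖ * ‖qFactorial q i‖ * ‖qFactorial q (l + 1 - i)‖
      = ‖qNat q (l + 1)‖ * ‖qFactorial q l‖ := by
        rw [mul_assoc, ← norm_mul, ← norm_mul, qBinom_mul_qFactorial_mul_qFactorial hqru,
          qFactorial_succ, norm_mul, mul_comm]
    _ ≤ ‖qNat q (l + 1)‖ * ‖qFactorial q (l + 1 - i)‖ :=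
        mul_le_mul_of_nonneg_left (antitone_norm_qFactorial hq (by omega)) (norm_nonneg _)

end QNumberNorms

section PolyGaussNorm

lemma toAbsoluteValue_apply (a : Kv) : NormedField.toAbsoluteValue Kv a = ‖a‖ := rfl

lemma norm_coeff_le_gaussNorm (P : Polynomial Kv) (i : ℕ) :
    ‖P.coeff i‖ ≤ P.gaussNorm (NormedField.toAbsoluteValue Kv) 1 := by
  simpa [toAbsoluteValue_apply] using
    P.le_gaussNorm (NormedField.toAbsoluteValue Kv) zero_le_one i

lemma polyGaussNorm_eq_gaussNorm (P : Polynomial Kv) :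
    polyGaussNorm P = P.gaussNorm (NormedField.toAbsoluteValue Kv) 1 := by
  refine (ciSup_le (norm_coeff_le_gaussNorm P)).antisymm ?_
  obtain ⟨i, hi⟩ := P.exists_eq_gaussNorm (NormedField.toAbsoluteValue Kv) 1
  rw [hi, one_pow, mul_one]
  exact le_ciSup (f := fun i => ‖P.coeff i‖)
    ⟨_, Set.forall_mem_range.mpr (norm_coeff_le_gaussNorm P)⟩ i

lemma norm_coeff_le_polyGaussNorm (P : Polynomial Kv) (i : ℕ) : ‖P.coeff i‖ ≤ polyGaussNorm P :=
  (norm_coeff_le_gaussNorm P i).trans_eq (polyGaussNorm_eq_gaussNorm P).symm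

lemma polyGaussNorm_nonneg (P : Polynomial Kv) : 0 ≤ polyGaussNorm P :=
  Real.iSup_nonneg fun _ => norm_nonneg _

lemma polyGaussNorm_pos {P : Polynomial Kv} (hP : P ≠ 0) : 0 < polyGaussNorm P :=
  (norm_pos_iff.mpr (Polynomial.leadingCoeff_ne_zero.mpr hP)).trans_le
    (norm_coeff_le_polyGaussNorm P P.natDegree)

lemma polyGaussNorm_C (a : Kv) : polyGaussNorm (Polynomial.C a) = ‖a‖ := by
  rw [polyGaussNorm_eq_gaussNorm, Polynomial.gaussNorm_C, toAbsoluteValue_apply]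

lemma polyGaussNorm_one : polyGaussNorm (1 : Polynomial Kv) = 1 := by
  rw [← Polynomial.C_1, polyGaussNorm_C, norm_one]

lemma polyGaussNorm_X : polyGaussNorm (Polynomial.X : Polynomial Kv) = 1 := by
  rw [polyGaussNorm_eq_gaussNorm, ← Polynomial.monomial_one_one_eq_X,
    Polynomial.gaussNorm_monomial, map_one, one_pow, mul_one]

variable [IsUltrametricDist Kv]

lemma polyGaussNorm_mul (P Q : Polynomial Kv) :
    polyGaussNorm (P * Q) = polyGaussNorm P * polyGaussNorm Q := by
  simp only [polyGaussNorm_eq_gaussNorm]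
  exact Polynomial.gaussNorm_mul (v := NormedField.toAbsoluteValue Kv)
    IsUltrametricDist.isNonarchimedean_norm one_pos P Q

lemma polyGaussNorm_add_le_max (P Q : Polynomial Kv) :
    polyGaussNorm (P + Q) ≤ max (polyGaussNorm P) (polyGaussNorm Q) := by
  simp only [polyGaussNorm_eq_gaussNorm]
  exact Polynomial.isNonarchimedean_gaussNorm (NormedField.toAbsoluteValue Kv)
    IsUltrametricDist.isNonarchimedean_norm zero_le_one P Q

end PolyGaussNorm

section GaussNorm

lemma gaussNorm_nonneg (f : RatFunc Kv) : 0 ≤ gaussNorm f :=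
  div_nonneg (polyGaussNorm_nonneg _) (polyGaussNorm_nonneg _)

lemma gaussNorm_eq_zero {f : RatFunc Kv} : gaussNorm f = 0 ↔ f = 0 := by
  refine ⟨fun h => ?_, fun h => by simp [h, gaussNorm, polyGaussNorm]⟩
  by_contra hf
  exact (div_pos (polyGaussNorm_pos (RatFunc.num_ne_zero hf))
    (polyGaussNorm_pos f.denom_ne_zero)).ne' h

variable [IsUltrametricDist Kv]

lemma gaussNorm_algebraMap_div (P : Polynomial Kv) {Q : Polynomial Kv} (hQ : Q ≠ 0) :
    gaussNorm (algebraMap (Polynomial Kv) (RatFunc Kv) P / algebraMap _ _ Q) =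
      polyGaussNorm P / polyGaussNorm Q := by
  set f := algebraMap (Polynomial Kv) (RatFunc Kv) P / algebraMap _ _ Q with hf
  have h : f.num * Q = P * f.denom := (RatFunc.num_mul_eq_mul_denom_iff hQ).mpr hf
  rw [gaussNorm, div_eq_div_iff (polyGaussNorm_pos f.denom_ne_zero).ne' (polyGaussNorm_pos hQ).ne',
    ← polyGaussNorm_mul, ← polyGaussNorm_mul, h]

lemma gaussNorm_algebraMap (P : Polynomial Kv) :
    gaussNorm (algebraMap (Polynomial Kv) (RatFunc Kv) P) = polyGaussNorm P := by
  simpa [polyGaussNorm_one] using gaussNorm_algebraMap_div P one_ne_zero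

lemma gaussNorm_C (a : Kv) : gaussNorm (RatFunc.C a) = ‖a‖ := by
  rw [← RatFunc.algebraMap_C, gaussNorm_algebraMap, polyGaussNorm_C]

lemma gaussNorm_X : gaussNorm (RatFunc.X : RatFunc Kv) = 1 := by
  rw [← RatFunc.algebraMap_X, gaussNorm_algebraMap, polyGaussNorm_X]

lemma gaussNorm_mul (f g : RatFunc Kv) : gaussNorm (f * g) = gaussNorm f * gaussNorm g := by
  rw [← f.num_div_denom, ← g.num_div_denom, div_mul_div_comm, ← map_mul, ← map_mul,
    gaussNorm_algebraMap_div _ (mul_ne_zero f.denom_ne_zero g.denom_ne_zero),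
    gaussNorm_algebraMap_div _ f.denom_ne_zero, gaussNorm_algebraMap_div _ g.denom_ne_zero,
    polyGaussNorm_mul, polyGaussNorm_mul, div_mul_div_comm]

lemma gaussNorm_add_le_max (f g : RatFunc Kv) :
    gaussNorm (f + g) ≤ max (gaussNorm f) (gaussNorm g) := by
  have hf := polyGaussNorm_pos f.denom_ne_zero
  have hg := polyGaussNorm_pos g.denom_ne_zero
  have hsum : f + g = algebraMap _ _ (f.num * g.denom + f.denom * g.num) /
      algebraMap _ _ (f.denom * g.denom) := by
    conv_lhs => rw [← f.num_div_denom, ← g.num_div_denom,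
      div_add_div _ _ (RatFunc.algebraMap_ne_zero f.denom_ne_zero)
        (RatFunc.algebraMap_ne_zero g.denom_ne_zero)]
    simp only [map_add, map_mul]
  rw [hsum, gaussNorm_algebraMap_div _ (mul_ne_zero f.denom_ne_zero g.denom_ne_zero),
    polyGaussNorm_mul, gaussNorm, gaussNorm, div_le_iff₀ (mul_pos hf hg),
    max_mul_of_nonneg _ _ (mul_pos hf hg).le]
  refine (polyGaussNorm_add_le_max _ _).trans_eq ?_
  rw [polyGaussNorm_mul, polyGaussNorm_mul]
  congr 1 <;> field_simp

/-- The Gauss norm as an absolute value on the field of rational functions. -/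
def gaussAbs (Kv : Type*) [NormedField Kv] [IsUltrametricDist Kv] :
    AbsoluteValue (RatFunc Kv) ℝ where
  toFun := gaussNorm
  map_mul' := gaussNorm_mul
  nonneg' := gaussNorm_nonneg
  eq_zero' _ := gaussNorm_eq_zero
  add_le' f g := (gaussNorm_add_le_max f g).trans
    (max_le_add_of_nonneg (gaussNorm_nonneg f) (gaussNorm_nonneg g))

lemma gaussNorm_zero : gaussNorm (0 : RatFunc Kv) = 0 := map_zero (gaussAbs Kv)

lemma gaussNorm_one : gaussNorm (1 : RatFunc Kv) = 1 := map_one (gaussAbs Kv)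

lemma gaussNorm_div (f g : RatFunc Kv) : gaussNorm (f / g) = gaussNorm f / gaussNorm g :=
  map_div₀ (gaussAbs Kv) f g

lemma gaussNorm_pow (f : RatFunc Kv) (m : ℕ) : gaussNorm (f ^ m) = gaussNorm f ^ m :=
  map_pow (gaussAbs Kv) f m

lemma gaussNorm_neg (f : RatFunc Kv) : gaussNorm (-f) = gaussNorm f := (gaussAbs Kv).map_neg f

lemma gaussNorm_sub_le_max (f g : RatFunc Kv) :
    gaussNorm (f - g) ≤ max (gaussNorm f) (gaussNorm g) := by
  simpa only [sub_eq_add_neg, gaussNorm_neg] using gaussNorm_add_le_max f (-g)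

lemma gaussNorm_smul (a : Kv) (f : RatFunc Kv) : gaussNorm (a • f) = ‖a‖ * gaussNorm f := by
  rw [RatFunc.smul_eq_C_mul, gaussNorm_mul, gaussNorm_C]

lemma gaussNorm_sum_le {ι : Type*} (s : Finset ι) (f : ι → RatFunc Kv) {c : ℝ} (hc : 0 ≤ c)
    (h : ∀ i ∈ s, gaussNorm (f i) ≤ c) : gaussNorm (∑ i ∈ s, f i) ≤ c :=
  Finset.sum_induction f (gaussNorm · ≤ c)
    (fun _ _ hx hy => (gaussNorm_add_le_max _ _).trans (max_le hx hy))
    (gaussNorm_zero.trans_le hc) h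

end GaussNorm

section MatGaussNorm

variable {μ : ℕ}

lemma matGaussNorm_nonneg (M : Matrix (Fin μ) (Fin μ) (RatFunc Kv)) : 0 ≤ matGaussNorm M :=
  Real.iSup_nonneg fun _ => Real.iSup_nonneg fun _ => gaussNorm_nonneg _

lemma gaussNorm_apply_le_matGaussNorm (M : Matrix (Fin μ) (Fin μ) (RatFunc Kv)) (i j : Fin μ) :
    gaussNorm (M i j) ≤ matGaussNorm M :=
  (le_ciSup (Set.finite_range fun j => gaussNorm (M i j)).bddAbove j).trans
    (le_ciSup (Set.finite_range fun i => ⨆ j, gaussNorm (M i j)).bddAbove i)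

lemma matGaussNorm_le_iff {M : Matrix (Fin μ) (Fin μ) (RatFunc Kv)} {c : ℝ} (hc : 0 ≤ c) :
    matGaussNorm M ≤ c ↔ ∀ i j, gaussNorm (M i j) ≤ c :=
  ⟨fun h i j => (gaussNorm_apply_le_matGaussNorm M i j).trans h,
    fun h => Real.iSup_le (fun i => Real.iSup_le (h i) hc) hc⟩

lemma matGaussNorm_map_le {M : Matrix (Fin μ) (Fin μ) (RatFunc Kv)} {φ : RatFunc Kv → RatFunc Kv}
    {c : ℝ} (hc : 0 ≤ c) (hφ : ∀ f, gaussNorm (φ f) ≤ c * gaussNorm f) :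
    matGaussNorm (M.map φ) ≤ c * matGaussNorm M :=
  (matGaussNorm_le_iff (mul_nonneg hc (matGaussNorm_nonneg M))).mpr fun i j =>
    (hφ _).trans (mul_le_mul_of_nonneg_left (gaussNorm_apply_le_matGaussNorm M i j) hc)

variable [IsUltrametricDist Kv] (M N : Matrix (Fin μ) (Fin μ) (RatFunc Kv))

lemma matGaussNorm_zero : matGaussNorm (0 : Matrix (Fin μ) (Fin μ) (RatFunc Kv)) = 0 :=
  ((matGaussNorm_le_iff le_rfl).mpr fun _ _ => gaussNorm_zero.le).antisymm (matGaussNorm_nonneg _)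

lemma matGaussNorm_one_le : matGaussNorm (1 : Matrix (Fin μ) (Fin μ) (RatFunc Kv)) ≤ 1 := by
  refine (matGaussNorm_le_iff zero_le_one).mpr fun i j => ?_
  rw [Matrix.one_apply]
  split_ifs
  exacts [gaussNorm_one.le, gaussNorm_zero.trans_le zero_le_one]

lemma matGaussNorm_add_le_max :
    matGaussNorm (M + N) ≤ max (matGaussNorm M) (matGaussNorm N) :=
  (matGaussNorm_le_iff (le_max_of_le_left (matGaussNorm_nonneg M))).mpr fun i j =>
    (gaussNorm_add_le_max _ _).trans
      (max_le_max (gaussNorm_apply_le_matGaussNorm M i j) (gaussNorm_apply_le_matGaussNorm N i j))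

lemma matGaussNorm_mul_le : matGaussNorm (M * N) ≤ matGaussNorm M * matGaussNorm N := by
  have hMN := mul_nonneg (matGaussNorm_nonneg M) (matGaussNorm_nonneg N)
  refine (matGaussNorm_le_iff hMN).mpr fun i j => ?_
  rw [Matrix.mul_apply]
  refine gaussNorm_sum_le _ _ hMN fun k _ => ?_
  rw [gaussNorm_mul]
  exact mul_le_mul (gaussNorm_apply_le_matGaussNorm M i k) (gaussNorm_apply_le_matGaussNorm N k j)
    (gaussNorm_nonneg _) (matGaussNorm_nonneg M)

lemma matGaussNorm_smul_le (a : Kv) : matGaussNorm (a • M) ≤ ‖a‖ * matGaussNorm M :=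
  matGaussNorm_map_le (norm_nonneg a) fun f => (gaussNorm_smul a f).le

lemma matGaussNorm_ratFunc_smul_le (f : RatFunc Kv) :
    matGaussNorm (f • M) ≤ gaussNorm f * matGaussNorm M :=
  matGaussNorm_map_le (gaussNorm_nonneg f) fun g => (gaussNorm_mul f g).le

lemma matGaussNorm_sum_le {ι : Type*} (s : Finset ι)
    (f : ι → Matrix (Fin μ) (Fin μ) (RatFunc Kv)) {c : ℝ} (hc : 0 ≤ c)
    (h : ∀ i ∈ s, matGaussNorm (f i) ≤ c) : matGaussNorm (∑ i ∈ s, f i) ≤ c :=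
  Finset.sum_induction f (matGaussNorm · ≤ c)
    (fun _ _ hx hy => (matGaussNorm_add_le_max _ _).trans (max_le hx hy))
    (matGaussNorm_zero.trans_le hc) h

end MatGaussNorm

section QDifference

variable {q : Kv}

/-- The substitution `x ↦ qx` as an endomorphism of the `Kv`-algebra of rational functions. -/
def ratSubstAlgHom (q : Kv) (hq : q ≠ 0) : RatFunc Kv →ₐ[Kv] RatFunc Kv :=
  RatFunc.mapAlgHom (Polynomial.aeval (Polynomial.C q * Polynomial.X)) fun P hP => by
    rw [mem_nonZeroDivisors_iff_ne_zero] at hP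
    rwa [Submonoid.mem_comap, mem_nonZeroDivisors_iff_ne_zero, ← Polynomial.comp_eq_aeval, Ne,
      Polynomial.comp_C_mul_X_eq_zero_iff (mem_nonZeroDivisors_of_ne_zero hq)]

lemma coe_ratSubstAlgHom (hq : q ≠ 0) : ⇑(ratSubstAlgHom q hq) = ratSubst q := by
  funext f
  rw [ratSubstAlgHom, RatFunc.coe_mapAlgHom_eq_coe_map, RatFunc.map_apply]
  rfl

lemma ratSubst_algebraMap (q : Kv) (P : Polynomial Kv) :
    ratSubst q (algebraMap _ (RatFunc Kv) P) =
      algebraMap _ _ (P.comp (Polynomial.C q * Polynomial.X)) := by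
  simp [ratSubst]

lemma ratSubst_X (q : Kv) : ratSubst q RatFunc.X = RatFunc.C q * RatFunc.X := by
  simp [ratSubst]

lemma ratSubst_C (q a : Kv) : ratSubst q (RatFunc.C a) = RatFunc.C a := by
  simp [ratSubst]

lemma C_sub_one_mul_X_ne_zero (hq : q ≠ 1) : RatFunc.C (q - 1) * RatFunc.X ≠ 0 :=
  mul_ne_zero ((map_ne_zero _).mpr (sub_ne_zero.mpr hq)) RatFunc.X_ne_zero

lemma qDeriv_C (q a : Kv) : qDeriv q (RatFunc.C a) = 0 := by
  rw [qDeriv, ratSubst_C, sub_self, zero_div]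

lemma iterate_succ_qDeriv_C (q a : Kv) (k : ℕ) : (qDeriv q)^[k + 1] (RatFunc.C a) = 0 := by
  rw [Function.iterate_succ_apply, qDeriv_C]
  exact Function.iterate_fixed (by simpa using qDeriv_C q 0) k

lemma qDeriv_X (hq : q ≠ 1) : qDeriv q RatFunc.X = 1 := by
  rw [qDeriv, div_eq_one_iff_eq (C_sub_one_mul_X_ne_zero hq), ratSubst_X, map_sub, map_one,
    sub_one_mul]

lemma ratSubst_eq_add_qDeriv (hq : q ≠ 1) (f : RatFunc Kv) :
    ratSubst q f = f + RatFunc.C (q - 1) * RatFunc.X * qDeriv q f := by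
  rw [qDeriv, mul_div_cancel₀ _ (C_sub_one_mul_X_ne_zero hq), add_sub_cancel]

lemma isLinearMap_qDeriv (hq : q ≠ 0) : IsLinearMap Kv (qDeriv q) where
  map_add f g := by
    simp only [qDeriv, ← coe_ratSubstAlgHom hq, map_add]
    ring
  map_smul c f := by
    simp only [qDeriv, ← coe_ratSubstAlgHom hq, map_smul, ← smul_sub, smul_div_assoc]

lemma iterate_qDeriv_sum {ι : Type*} (hq : q ≠ 0) (k : ℕ) (s : Finset ι) (f : ι → RatFunc Kv) :
    (qDeriv q)^[k] (∑ i ∈ s, f i) = ∑ i ∈ s, (qDeriv q)^[k] (f i) := by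
  have h := map_sum ((isLinearMap_qDeriv hq).mk' (qDeriv q) ^ k) f s
  rwa [Module.End.coe_pow] at h

lemma qDeriv_mul (hq : q ≠ 0) (f g : RatFunc Kv) :
    qDeriv q (f * g) = qDeriv q f * g + ratSubst q f * qDeriv q g := by
  simp only [qDeriv, ← coe_ratSubstAlgHom hq, map_mul]
  ring

lemma qDeriv_ratSubst (hq : q ≠ 0) (f : RatFunc Kv) :
    qDeriv q (ratSubst q f) = q • ratSubst q (qDeriv q f) := by
  have hC : RatFunc.C q ≠ 0 := by simpa using hq
  simp only [qDeriv, ← coe_ratSubstAlgHom hq, map_div₀, map_mul, map_sub]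
  simp only [coe_ratSubstAlgHom hq, ratSubst_C, ratSubst_X, RatFunc.smul_eq_C_mul]
  field_simp

theorem iterate_qDeriv_mul (hq : ∀ m : ℕ, 0 < m → q ^ m ≠ 1) (hq₀ : q ≠ 0) (k : ℕ)
    (f g : RatFunc Kv) :
    (qDeriv q)^[k] (f * g) = ∑ i ∈ Finset.range (k + 1),
      qBinom q k i • ((ratSubst q)^[i] ((qDeriv q)^[k - i] f) * (qDeriv q)^[i] g) :=
  qLeibniz hq (isLinearMap_qDeriv hq₀)
    (fun c f => by rw [← coe_ratSubstAlgHom hq₀, map_smul]) (qDeriv_mul hq₀)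
    (qDeriv_ratSubst hq₀) k f g

end QDifference

section QDifferenceNorms

variable {q : Kv}

lemma polyGaussNorm_comp_C_mul_X (hq : ‖q‖ = 1) (P : Polynomial Kv) :
    polyGaussNorm (P.comp (Polynomial.C q * Polynomial.X)) = polyGaussNorm P := by
  simp only [polyGaussNorm, Polynomial.comp_C_mul_X_coeff, norm_mul, norm_pow, hq, one_pow, mul_one]

variable [IsUltrametricDist Kv]

lemma polyGaussNorm_comp_C_mul_X_sub_le (hq : ‖q‖ ≤ 1) (P : Polynomial Kv) :
    polyGaussNorm (P.comp (Polynomial.C q * Polynomial.X) - P) ≤ ‖q - 1‖ * polyGaussNorm P := by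
  refine ciSup_le fun i => ?_
  rw [Polynomial.coeff_sub, Polynomial.comp_C_mul_X_coeff, ← mul_sub_one, norm_mul, mul_comm]
  exact mul_le_mul (norm_pow_sub_one_le hq i) (norm_coeff_le_polyGaussNorm P i) (norm_nonneg _)
    (norm_nonneg _)

lemma gaussNorm_ratSubst (hq : ‖q‖ = 1) (f : RatFunc Kv) :
    gaussNorm (ratSubst q f) = gaussNorm f := by
  rw [ratSubst, gaussNorm_div, gaussNorm_algebraMap, gaussNorm_algebraMap,
    polyGaussNorm_comp_C_mul_X hq, polyGaussNorm_comp_C_mul_X hq, gaussNorm]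

lemma gaussNorm_iterate_ratSubst (hq : ‖q‖ = 1) (i : ℕ) (f : RatFunc Kv) :
    gaussNorm ((ratSubst q)^[i] f) = gaussNorm f := by
  induction i with
  | zero => rfl
  | succ i ih => rw [Function.iterate_succ_apply', gaussNorm_ratSubst hq, ih]

lemma gaussNorm_ratSubst_sub_le (hq : ‖q‖ = 1) (f : RatFunc Kv) :
    gaussNorm (ratSubst q f - f) ≤ ‖q - 1‖ * gaussNorm f := by
  have hpoly (P : Polynomial Kv) : gaussNorm (ratSubst q (algebraMap _ _ P) - algebraMap _ _ P) ≤
      ‖q - 1‖ * gaussNorm (algebraMap _ (RatFunc Kv) P) := by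
    rw [ratSubst_algebraMap, ← map_sub, gaussNorm_algebraMap, gaussNorm_algebraMap]
    exact polyGaussNorm_comp_C_mul_X_sub_le hq.le P
  set N := algebraMap _ (RatFunc Kv) f.num
  set D := algebraMap _ (RatFunc Kv) f.denom
  have hD : D ≠ 0 := RatFunc.algebraMap_ne_zero f.denom_ne_zero
  have hD_pos : 0 < gaussNorm D := (gaussAbs Kv).pos hD
  have hf : f * D = N := (eq_div_iff hD).mp f.num_div_denom.symm
  have hσD : gaussNorm (ratSubst q D) = gaussNorm D := gaussNorm_ratSubst hq D
  have hσD₀ : ratSubst q D ≠ 0 := (gaussAbs Kv).pos_iff.mp (hD_pos.trans_eq hσD.symm)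
  have hσf : ratSubst q f = ratSubst q N / ratSubst q D := by
    rw [ratSubst_algebraMap, ratSubst_algebraMap, ratSubst]
  have hsub : ratSubst q f - f =
      ((ratSubst q N - N) - f * (ratSubst q D - D)) / ratSubst q D := by
    rw [hσf, ← hf]; field_simp; ring
  rw [hsub, gaussNorm_div, hσD, div_le_iff₀ hD_pos, mul_assoc, ← gaussNorm_mul, hf]
  refine (gaussNorm_sub_le_max _ _).trans (max_le (hpoly _) ?_)
  rw [gaussNorm_mul, ← hf, gaussNorm_mul, mul_left_comm]
  exact mul_le_mul_of_nonneg_left (hpoly _) (gaussNorm_nonneg f)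

lemma gaussNorm_qDeriv_le (hq : ‖q‖ = 1) (hq' : q ≠ 1) (f : RatFunc Kv) :
    gaussNorm (qDeriv q f) ≤ gaussNorm f := by
  rw [qDeriv, gaussNorm_div, gaussNorm_mul, gaussNorm_C, gaussNorm_X, mul_one,
    div_le_iff₀ (norm_pos_iff.mpr (sub_ne_zero.mpr hq')), mul_comm]
  exact gaussNorm_ratSubst_sub_le hq f

end QDifferenceNorms

section CauchyEstimate

/-- The Cauchy estimate `|d_q^k f / [k]_q!| ≤ |f|` in Gauss norm, for every order `k`. -/
def QCauchyEstimate (q : Kv) (f : RatFunc Kv) : Prop :=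
  ∀ k, gaussNorm ((qDeriv q)^[k] f) ≤ ‖qFactorial q k‖ * gaussNorm f

variable [IsUltrametricDist Kv] {q : Kv}

lemma gaussNorm_qLeibniz_term_le (hq : ‖q‖ = 1) (hqru : ∀ m : ℕ, 0 < m → q ^ m ≠ 1) (k i : ℕ)
    {f g a b : RatFunc Kv} (ha : gaussNorm a ≤ ‖qFactorial q (k - i)‖ * gaussNorm f)
    (hb : gaussNorm b ≤ ‖qFactorial q i‖ * gaussNorm g) :
    gaussNorm (qBinom q k i • ((ratSubst q)^[i] a * b)) ≤
      ‖qFactorial q k‖ * gaussNorm (f * g) := by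
  rw [gaussNorm_smul, gaussNorm_mul, gaussNorm_iterate_ratSubst hq]
  calc ‖qBinom q k i‖ * (gaussNorm a * gaussNorm b)
      ≤ ‖qBinom q k i‖ * (‖qFactorial q (k - i)‖ * gaussNorm f *
          (‖qFactorial q i‖ * gaussNorm g)) :=
        mul_le_mul_of_nonneg_left (mul_le_mul ha hb (gaussNorm_nonneg b)
          (mul_nonneg (norm_nonneg _) (gaussNorm_nonneg f))) (norm_nonneg _)
    _ = ‖qFactorial q k‖ * gaussNorm (f * g) := by
        rw [← qBinom_mul_qFactorial_mul_qFactorial hqru k i, norm_mul, norm_mul, gaussNorm_mul]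
        ring

namespace QCauchyEstimate

lemma const (q a : Kv) : QCauchyEstimate q (RatFunc.C a) := by
  intro k
  cases k with
  | zero => simp [qFactorial_zero]
  | succ k =>
    rw [iterate_succ_qDeriv_C, gaussNorm_zero]
    exact mul_nonneg (norm_nonneg _) (gaussNorm_nonneg _)

lemma X (hq : q ≠ 1) : QCauchyEstimate q RatFunc.X := by
  rintro (_ | _ | k)
  · simp [qFactorial_zero]
  · simp [qDeriv_X hq, qFactorial_succ, qFactorial_zero, qNat_one, gaussNorm_one, gaussNorm_X]
  · rw [Function.iterate_succ_apply, qDeriv_X hq, ← map_one RatFunc.C, iterate_succ_qDeriv_C,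
      gaussNorm_zero]
    exact mul_nonneg (norm_nonneg _) (gaussNorm_nonneg _)

lemma mul (hq : ‖q‖ = 1) (hqru : ∀ m : ℕ, 0 < m → q ^ m ≠ 1) {f g : RatFunc Kv}
    (hf : QCauchyEstimate q f) (hg : QCauchyEstimate q g) : QCauchyEstimate q (f * g) := by
  intro k
  rw [iterate_qDeriv_mul hqru (norm_ne_zero_iff.mp (hq.trans_ne one_ne_zero))]
  exact gaussNorm_sum_le _ _ (mul_nonneg (norm_nonneg _) (gaussNorm_nonneg _)) fun i _ =>
    gaussNorm_qLeibniz_term_le hq hqru k i (hf (k - i)) (hg i)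

lemma pow (hq : ‖q‖ = 1) (hqru : ∀ m : ℕ, 0 < m → q ^ m ≠ 1) {f : RatFunc Kv}
    (hf : QCauchyEstimate q f) (m : ℕ) : QCauchyEstimate q (f ^ m) := by
  induction m with
  | zero => simpa using const q 1
  | succ m ih => rw [pow_succ]; exact mul hq hqru ih hf

lemma algebraMap (hq : ‖q‖ = 1) (hqru : ∀ m : ℕ, 0 < m → q ^ m ≠ 1) (P : Polynomial Kv) :
    QCauchyEstimate q (algebraMap (Polynomial Kv) (RatFunc Kv) P) := by
  have hq₀ : q ≠ 0 := norm_ne_zero_iff.mp (hq.trans_ne one_ne_zero)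
  have hq' : q ≠ 1 := by simpa using hqru 1 one_pos
  have hmonomial (m : ℕ) : QCauchyEstimate q (RatFunc.C (P.coeff m) * RatFunc.X ^ m) :=
    mul hq hqru (const q _) (pow hq hqru (X hq') m)
  have hmonomial_le (m : ℕ) :
      gaussNorm (RatFunc.C (P.coeff m) * RatFunc.X ^ m) ≤ polyGaussNorm P := by
    rw [gaussNorm_mul, gaussNorm_C, gaussNorm_pow, gaussNorm_X, one_pow, mul_one]
    exact norm_coeff_le_polyGaussNorm P m
  intro k
  rw [gaussNorm_algebraMap]
  conv_lhs => rw [P.as_sum_range_C_mul_X_pow]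
  simp only [map_sum, map_mul, map_pow, RatFunc.algebraMap_C, RatFunc.algebraMap_X,
    iterate_qDeriv_sum hq₀]
  exact gaussNorm_sum_le _ _ (mul_nonneg (norm_nonneg _) (polyGaussNorm_nonneg P)) fun m _ =>
    (hmonomial m k).trans (mul_le_mul_of_nonneg_left (hmonomial_le m) (norm_nonneg _))

lemma div (hq : ‖q‖ = 1) (hqru : ∀ m : ℕ, 0 < m → q ^ m ≠ 1) {f g : RatFunc Kv} (hg₀ : g ≠ 0)
    (hf : QCauchyEstimate q f) (hg : QCauchyEstimate q g) : QCauchyEstimate q (f / g) := by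
  intro k
  induction k using Nat.strong_induction_on with
  | _ k ih =>
    have hleibniz := iterate_qDeriv_mul hqru (norm_ne_zero_iff.mp (hq.trans_ne one_ne_zero)) k
      (f / g) g
    rw [div_mul_cancel₀ f hg₀, Finset.sum_range_succ', qBinom_zero_right hqru, one_smul,
      Function.iterate_zero_apply, Function.iterate_zero_apply, Nat.sub_zero] at hleibniz
    refine le_of_mul_le_mul_right ?_ ((gaussAbs Kv).pos hg₀)
    change _ * gaussNorm g ≤ _ * gaussNorm g
    rw [← gaussNorm_mul, mul_assoc, ← gaussNorm_mul, eq_sub_of_add_eq' hleibniz.symm]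
    refine (gaussNorm_sub_le_max _ _).trans (max_le ?_ ?_)
    · rw [div_mul_cancel₀ f hg₀]
      exact hf k
    · refine gaussNorm_sum_le _ _ (mul_nonneg (norm_nonneg _) (gaussNorm_nonneg _)) fun i hi => ?_
      have hlt : k - (i + 1) < k := by have := Finset.mem_range.mp hi; lia
      exact gaussNorm_qLeibniz_term_le hq hqru k (i + 1) (ih _ hlt) (hg (i + 1))

end QCauchyEstimate

theorem qCauchyEstimate (hq : ‖q‖ = 1) (hqru : ∀ m : ℕ, 0 < m → q ^ m ≠ 1) (f : RatFunc Kv) :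
    QCauchyEstimate q f := by
  rw [← f.num_div_denom]
  exact .div hq hqru (RatFunc.algebraMap_ne_zero f.denom_ne_zero) (.algebraMap hq hqru _)
    (.algebraMap hq hqru _)

end CauchyEstimate

section QConnection

variable {μ : ℕ} {q : Kv}

/-- The operator `F ↦ G(x) F(qx) + d_q F` attached to the system `d_q y = G y`; its iterates
applied to the identity matrix are the matrices `G_n`. -/
def qConnection (q : Kv) (G F : Matrix (Fin μ) (Fin μ) (RatFunc Kv)) :
    Matrix (Fin μ) (Fin μ) (RatFunc Kv) :=
  G * F.map (ratSubst q) + F.map (qDeriv q)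

/-- The twist `F ↦ F + (q - 1) x Δ F`, i.e. `F ↦ (1 + (q - 1) x G(x)) F(qx)`, which replaces the
substitution `x ↦ qx` in the `q`-Leibniz rule for the operator `Δ = qConnection q G`. -/
def qConnectionTwist (q : Kv) (G F : Matrix (Fin μ) (Fin μ) (RatFunc Kv)) :
    Matrix (Fin μ) (Fin μ) (RatFunc Kv) :=
  F + (RatFunc.C (q - 1) * RatFunc.X) • qConnection q G F

lemma Gseq_eq_iterate_qConnection (q : Kv) (G : Matrix (Fin μ) (Fin μ) (RatFunc Kv)) (k : ℕ) :
    Gseq q G k = (qConnection q G)^[k] 1 := by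
  induction k with
  | zero => rfl
  | succ k ih => rw [Function.iterate_succ_apply', ← ih]; rfl

lemma matrixMap_ratSubst (hq : q ≠ 1) (F : Matrix (Fin μ) (Fin μ) (RatFunc Kv)) :
    F.map (ratSubst q) = F + (RatFunc.C (q - 1) * RatFunc.X) • F.map (qDeriv q) := by
  ext i j
  exact ratSubst_eq_add_qDeriv hq (F i j)

lemma matrixMap_ratSubst_mul (hq : q ≠ 0) (F H : Matrix (Fin μ) (Fin μ) (RatFunc Kv)) :
    (F * H).map (ratSubst q) = F.map (ratSubst q) * H.map (ratSubst q) := by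
  rw [← coe_ratSubstAlgHom hq, Matrix.map_mul]

lemma matrixMap_qDeriv_mul (hq : q ≠ 0) (F H : Matrix (Fin μ) (Fin μ) (RatFunc Kv)) :
    (F * H).map (qDeriv q) = F.map (qDeriv q) * H + F.map (ratSubst q) * H.map (qDeriv q) := by
  ext i j
  simp only [Matrix.map_apply, Matrix.add_apply, Matrix.mul_apply, ← Finset.sum_add_distrib,
    ← qDeriv_mul hq]
  exact map_sum ((isLinearMap_qDeriv hq).mk' (qDeriv q)) _ _

lemma isLinearMap_qConnection (hq : q ≠ 0) (G : Matrix (Fin μ) (Fin μ) (RatFunc Kv)) :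
    IsLinearMap Kv (qConnection q G) where
  map_add E F := by
    have hd : (E + F).map (qDeriv q) = E.map (qDeriv q) + F.map (qDeriv q) :=
      Matrix.map_add _ (isLinearMap_qDeriv hq).map_add E F
    rw [qConnection, hd, ← coe_ratSubstAlgHom hq, Matrix.map_add _ (map_add _), mul_add,
      coe_ratSubstAlgHom hq, qConnection, qConnection]
    abel
  map_smul c F := by
    have hd : (c • F).map (qDeriv q) = c • F.map (qDeriv q) :=
      Matrix.map_smul _ c ((isLinearMap_qDeriv hq).map_smul c) F
    rw [qConnection, hd, ← coe_ratSubstAlgHom hq, Matrix.map_smul _ c (map_smul _ c),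
      Matrix.mul_smul, coe_ratSubstAlgHom hq, qConnection, smul_add]

lemma qConnection_smul (hq : q ≠ 0) (G F : Matrix (Fin μ) (Fin μ) (RatFunc Kv)) (f : RatFunc Kv) :
    qConnection q G (f • F) = ratSubst q f • qConnection q G F + qDeriv q f • F := by
  have hσ : (f • F).map (ratSubst q) = ratSubst q f • F.map (ratSubst q) := by
    ext i j
    simp [← coe_ratSubstAlgHom hq]
  have hd : (f • F).map (qDeriv q) = qDeriv q f • F + ratSubst q f • F.map (qDeriv q) := by
    ext i j
    exact qDeriv_mul hq f (F i j)
  rw [qConnection, qConnection, hσ, hd, Matrix.mul_smul, smul_add]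
  abel

lemma qConnectionTwist_smul (hq : q ≠ 0) (G F : Matrix (Fin μ) (Fin μ) (RatFunc Kv)) (c : Kv) :
    qConnectionTwist q G (c • F) = c • qConnectionTwist q G F := by
  rw [qConnectionTwist, (isLinearMap_qConnection hq G).map_smul, smul_comm, ← smul_add,
    qConnectionTwist]

lemma qConnection_mul (hq₀ : q ≠ 0) (hq : q ≠ 1) (G F H : Matrix (Fin μ) (Fin μ) (RatFunc Kv)) :
    qConnection q G (F * H) =
      qConnection q G F * H + qConnectionTwist q G F * H.map (qDeriv q) := by
  rw [qConnectionTwist, qConnection, qConnection, matrixMap_ratSubst_mul hq₀,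
    matrixMap_qDeriv_mul hq₀, matrixMap_ratSubst hq H, matrixMap_ratSubst hq F]
  simp only [Matrix.mul_add, Matrix.add_mul, Matrix.mul_smul, Matrix.smul_mul, smul_add,
    Matrix.mul_assoc]
  abel

lemma qConnection_qConnectionTwist (hq₀ : q ≠ 0) (hq : q ≠ 1)
    (G F : Matrix (Fin μ) (Fin μ) (RatFunc Kv)) :
    qConnection q G (qConnectionTwist q G F) =
      q • qConnectionTwist q G (qConnection q G F) := by
  have hσ : ratSubst q (RatFunc.C (q - 1) * RatFunc.X) =
      q • (RatFunc.C (q - 1) * RatFunc.X) := by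
    rw [← coe_ratSubstAlgHom hq₀, map_mul, coe_ratSubstAlgHom hq₀, ratSubst_C, ratSubst_X,
      RatFunc.smul_eq_C_mul, mul_left_comm]
  have hd : qDeriv q (RatFunc.C (q - 1) * RatFunc.X) = RatFunc.C (q - 1) := by
    rw [qDeriv_mul hq₀, qDeriv_C, qDeriv_X hq, ratSubst_C, zero_mul, zero_add, mul_one]
  simp only [qConnectionTwist]
  rw [(isLinearMap_qConnection hq₀ G).map_add, qConnection_smul hq₀, hσ, hd, smul_add, smul_assoc,
    ← RatFunc.algebraMap_eq_C, algebraMap_smul, sub_smul, one_smul]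
  abel

theorem iterate_qConnection_mul (hq₀ : q ≠ 0) (hqru : ∀ m : ℕ, 0 < m → q ^ m ≠ 1)
    (G F H : Matrix (Fin μ) (Fin μ) (RatFunc Kv)) (k : ℕ) :
    (qConnection q G)^[k] (F * H) = ∑ i ∈ Finset.range (k + 1), qBinom q k i •
      ((qConnectionTwist q G)^[i] ((qConnection q G)^[k - i] F) * H.map (qDeriv q)^[i]) := by
  have hq : q ≠ 1 := by simpa using hqru 1 one_pos
  have hmap (i : ℕ) : H.map (qDeriv q)^[i] = (Matrix.map · (qDeriv q))^[i] H := by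
    induction i with
    | zero => rfl
    | succ i ih => rw [Function.iterate_succ_apply', ← ih, Matrix.map_map, Function.iterate_succ']
  simp only [hmap]
  exact qLeibniz hqru (isLinearMap_qConnection hq₀ G) (fun c F => qConnectionTwist_smul hq₀ G F c)
    (qConnection_mul hq₀ hq G) (qConnection_qConnectionTwist hq₀ hq G) k F H

end QConnection

section QConnectionNorms

variable {μ : ℕ} {q : Kv} {G : Matrix (Fin μ) (Fin μ) (RatFunc Kv)}

lemma matGaussNorm_iterate_le
    {Φ : Matrix (Fin μ) (Fin μ) (RatFunc Kv) → Matrix (Fin μ) (Fin μ) (RatFunc Kv)} {c : ℝ}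
    (hc : 0 ≤ c) (hΦ : ∀ F, matGaussNorm (Φ F) ≤ c * matGaussNorm F) (m : ℕ)
    (F : Matrix (Fin μ) (Fin μ) (RatFunc Kv)) :
    matGaussNorm (Φ^[m] F) ≤ c ^ m * matGaussNorm F := by
  induction m with
  | zero => rw [pow_zero, one_mul, Function.iterate_zero_apply]
  | succ m ih =>
    rw [Function.iterate_succ_apply', pow_succ', mul_assoc]
    exact (hΦ _).trans (mul_le_mul_of_nonneg_left ih hc)

variable [IsUltrametricDist Kv]

lemma matGaussNorm_qConnection_le (hq : ‖q‖ = 1) (hq' : q ≠ 1) (hG : matGaussNorm G ≤ 1)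
    (F : Matrix (Fin μ) (Fin μ) (RatFunc Kv)) :
    matGaussNorm (qConnection q G F) ≤ matGaussNorm F := by
  have hσ : matGaussNorm (F.map (ratSubst q)) ≤ 1 * matGaussNorm F :=
    matGaussNorm_map_le zero_le_one fun f => by rw [gaussNorm_ratSubst hq, one_mul]
  have hd : matGaussNorm (F.map (qDeriv q)) ≤ 1 * matGaussNorm F :=
    matGaussNorm_map_le zero_le_one fun f => by rw [one_mul]; exact gaussNorm_qDeriv_le hq hq' f
  rw [one_mul] at hσ hd
  refine (matGaussNorm_add_le_max _ _).trans (max_le ?_ hd)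
  calc matGaussNorm (G * F.map (ratSubst q))
      ≤ matGaussNorm G * matGaussNorm (F.map (ratSubst q)) := matGaussNorm_mul_le _ _
    _ ≤ 1 * matGaussNorm F := mul_le_mul hG hσ (matGaussNorm_nonneg _) zero_le_one
    _ = matGaussNorm F := one_mul _

lemma matGaussNorm_iterate_qConnection_le (hq : ‖q‖ = 1) (hq' : q ≠ 1) (hG : matGaussNorm G ≤ 1)
    (m : ℕ) (F : Matrix (Fin μ) (Fin μ) (RatFunc Kv)) :
    matGaussNorm ((qConnection q G)^[m] F) ≤ matGaussNorm F := by
  have h := matGaussNorm_iterate_le zero_le_one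
    (fun F => (matGaussNorm_qConnection_le hq hq' hG F).trans_eq (one_mul _).symm) m F
  rwa [one_pow, one_mul] at h

lemma matGaussNorm_qConnectionTwist_le (hq : ‖q‖ = 1) (hq' : q ≠ 1) (hG : matGaussNorm G ≤ 1)
    (F : Matrix (Fin μ) (Fin μ) (RatFunc Kv)) :
    matGaussNorm (qConnectionTwist q G F) ≤ matGaussNorm F := by
  have hc : gaussNorm (RatFunc.C (q - 1) * RatFunc.X) ≤ 1 := by
    rw [gaussNorm_mul, gaussNorm_C, gaussNorm_X, mul_one]
    exact norm_sub_one_le_one hq.le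
  refine (matGaussNorm_add_le_max _ _).trans (max_le le_rfl ?_)
  calc _ ≤ gaussNorm (RatFunc.C (q - 1) * RatFunc.X) * matGaussNorm (qConnection q G F) :=
        matGaussNorm_ratFunc_smul_le _ _
    _ ≤ 1 * matGaussNorm F := mul_le_mul hc (matGaussNorm_qConnection_le hq hq' hG F)
        (matGaussNorm_nonneg _) zero_le_one
    _ = matGaussNorm F := one_mul _

lemma matGaussNorm_iterate_qConnectionTwist_le (hq : ‖q‖ = 1) (hq' : q ≠ 1)
    (hG : matGaussNorm G ≤ 1) (m : ℕ) (F : Matrix (Fin μ) (Fin μ) (RatFunc Kv)) :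
    matGaussNorm ((qConnectionTwist q G)^[m] F) ≤ matGaussNorm F := by
  have h := matGaussNorm_iterate_le zero_le_one
    (fun F => (matGaussNorm_qConnectionTwist_le hq hq' hG F).trans_eq (one_mul _).symm) m F
  rwa [one_pow, one_mul] at h

lemma matGaussNorm_qConnection_leibniz_term_le (hq : ‖q‖ = 1)
    (hqru : ∀ m : ℕ, 0 < m → q ^ m ≠ 1) (hG : matGaussNorm G ≤ 1)
    (F H : Matrix (Fin μ) (Fin μ) (RatFunc Kv)) {k i : ℕ} (hi : i ≠ 0) (hik : i ≤ k) :
    matGaussNorm (qBinom q k i •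
        ((qConnectionTwist q G)^[i] ((qConnection q G)^[k - i] F) * H.map (qDeriv q)^[i])) ≤
      ‖qNat q k‖ * (matGaussNorm F * matGaussNorm H) := by
  have hq' : q ≠ 1 := by simpa using hqru 1 one_pos
  have hF : matGaussNorm ((qConnectionTwist q G)^[i] ((qConnection q G)^[k - i] F)) ≤
      matGaussNorm F :=
    (matGaussNorm_iterate_qConnectionTwist_le hq hq' hG _ _).trans
      (matGaussNorm_iterate_qConnection_le hq hq' hG _ _)
  have hH : matGaussNorm (H.map (qDeriv q)^[i]) ≤ ‖qFactorial q i‖ * matGaussNorm H :=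
    matGaussNorm_map_le (norm_nonneg _) fun f => qCauchyEstimate hq hqru f i
  have hF₀ := matGaussNorm_nonneg F
  have hH₀ := matGaussNorm_nonneg H
  calc _ ≤ ‖qBinom q k i‖ * (matGaussNorm F * (‖qFactorial q i‖ * matGaussNorm H)) :=
        (matGaussNorm_smul_le _ _).trans (mul_le_mul_of_nonneg_left
          ((matGaussNorm_mul_le _ _).trans (mul_le_mul hF hH (matGaussNorm_nonneg _) hF₀))
          (norm_nonneg _))
    _ = ‖qBinom q k i‖ * ‖qFactorial q i‖ * (matGaussNorm F * matGaussNorm H) := by ring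
    _ ≤ _ := mul_le_mul_of_nonneg_right
        (norm_qBinom_mul_norm_qFactorial_le hq.le hqru hi hik) (mul_nonneg hF₀ hH₀)

theorem matGaussNorm_iterate_qConnection_mul_sub_le (hq : ‖q‖ = 1)
    (hqru : ∀ m : ℕ, 0 < m → q ^ m ≠ 1) (hG : matGaussNorm G ≤ 1)
    (F H : Matrix (Fin μ) (Fin μ) (RatFunc Kv)) (k : ℕ) :
    matGaussNorm ((qConnection q G)^[k] (F * H) - (qConnection q G)^[k] F * H) ≤
      ‖qNat q k‖ * (matGaussNorm F * matGaussNorm H) := by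
  rw [iterate_qConnection_mul (norm_ne_zero_iff.mp (hq.trans_ne one_ne_zero)) hqru,
    Finset.sum_range_succ', qBinom_zero_right hqru, one_smul, Function.iterate_zero_apply,
    Nat.sub_zero, Function.iterate_zero, Matrix.map_id, add_sub_cancel_right]
  refine matGaussNorm_sum_le _ _ (mul_nonneg (norm_nonneg _)
    (mul_nonneg (matGaussNorm_nonneg F) (matGaussNorm_nonneg H))) fun i hi => ?_
  exact matGaussNorm_qConnection_leibniz_term_le hq hqru hG F H i.succ_ne_zero
    (Finset.mem_range.mp hi)

theorem matGaussNorm_iterate_qConnection_le_max_mul (hq : ‖q‖ = 1)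
    (hqru : ∀ m : ℕ, 0 < m → q ^ m ≠ 1) (hG : matGaussNorm G ≤ 1) (k : ℕ)
    (H : Matrix (Fin μ) (Fin μ) (RatFunc Kv)) :
    matGaussNorm ((qConnection q G)^[k] H) ≤
      max ‖qNat q k‖ (matGaussNorm (Gseq q G k)) * matGaussNorm H := by
  have hH := matGaussNorm_nonneg H
  have hleibniz := matGaussNorm_iterate_qConnection_mul_sub_le hq hqru hG 1 H k
  rw [one_mul, ← Gseq_eq_iterate_qConnection] at hleibniz
  rw [← sub_add_cancel ((qConnection q G)^[k] H) (Gseq q G k * H), max_mul_of_nonneg _ _ hH]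
  refine (matGaussNorm_add_le_max _ _).trans
    (max_le_max (hleibniz.trans ?_) (matGaussNorm_mul_le _ _))
  exact mul_le_mul_of_nonneg_left (mul_le_of_le_one_left hH matGaussNorm_one_le) (norm_nonneg _)

theorem matGaussNorm_Gseq_le_pow (hq : ‖q‖ = 1) (hqru : ∀ m : ℕ, 0 < m → q ^ m ≠ 1)
    (hG : matGaussNorm G ≤ 1) {k : ℕ} {s : ℝ} (hs : ‖qNat q k‖ ≤ s)
    (hred : matGaussNorm (Gseq q G k) ≤ s) (N : ℕ) :
    matGaussNorm (Gseq q G N) ≤ s ^ (N / k) := by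
  have hs₀ : 0 ≤ s := (norm_nonneg _).trans hs
  have hcontract (F : Matrix (Fin μ) (Fin μ) (RatFunc Kv)) :
      matGaussNorm ((qConnection q G)^[k] F) ≤ s * matGaussNorm F :=
    (matGaussNorm_iterate_qConnection_le_max_mul hq hqru hG k F).trans
      (mul_le_mul_of_nonneg_right (max_le hs hred) (matGaussNorm_nonneg F))
  have hsplit : Gseq q G N = (qConnection q G)^[N % k] (((qConnection q G)^[k])^[N / k] 1) := by
    rw [Gseq_eq_iterate_qConnection, ← Function.iterate_mul, ← Function.iterate_add_apply,
      Nat.mod_add_div]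
  calc matGaussNorm (Gseq q G N)
      ≤ matGaussNorm (((qConnection q G)^[k])^[N / k] 1) := by
        rw [hsplit]
        exact matGaussNorm_iterate_qConnection_le hq (by simpa using hqru 1 one_pos) hG _ _
    _ ≤ s ^ (N / k) * matGaussNorm (1 : Matrix (Fin μ) (Fin μ) (RatFunc Kv)) :=
        matGaussNorm_iterate_le hs₀ hcontract _ _
    _ ≤ s ^ (N / k) := mul_le_of_le_one_right (pow_nonneg hs₀ _) matGaussNorm_one_le

end QConnectionNorms

section QFactorialNorm

variable [IsUltrametricDist Kv]

lemma norm_natCast_eq_one_of_coprime {p l : ℕ} (hp : ‖(p : Kv)‖ < 1) (h : p.Coprime l) :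
    ‖(l : Kv)‖ = 1 := by
  refine (IsUltrametricDist.norm_natCast_le_one Kv l).antisymm (not_lt.mp fun hl => ?_)
  have hbezout : (p : Kv) * (p.gcdA l : ℤ) + (l : Kv) * (p.gcdB l : ℤ) = 1 := by
    have h' := Nat.gcd_eq_gcd_ab p l
    rw [h.gcd_eq_one] at h'
    exact_mod_cast (congrArg (Int.cast : ℤ → Kv) h').symm
  have hlt {a : Kv} (ha : ‖a‖ < 1) (z : ℤ) : ‖a * z‖ < 1 := by
    rw [norm_mul]
    exact (mul_le_of_le_one_right (norm_nonneg a)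
      (IsUltrametricDist.norm_intCast_le_one Kv z)).trans_lt ha
  have hsum := (IsUltrametricDist.norm_add_le_max _ _).trans_lt
    (max_lt (hlt hp (p.gcdA l)) (hlt hl (p.gcdB l)))
  rw [hbezout, norm_one] at hsum
  exact hsum.false

lemma norm_natCast_eq_pow_padicValNat {p : ℕ} (hp : p.Prime) (hpv : ‖(p : Kv)‖ < 1) {m : ℕ}
    (hm : m ≠ 0) : ‖(m : Kv)‖ = ‖(p : Kv)‖ ^ padicValNat p m := by
  conv_lhs => rw [← Nat.ordProj_mul_ordCompl_eq_self m p]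
  rw [Nat.cast_mul, norm_mul,
    norm_natCast_eq_one_of_coprime hpv (Nat.coprime_ordCompl hp hm), mul_one, Nat.cast_pow,
    norm_pow, Nat.factorization_def _ hp]

variable {p : ℕ} {t : ℝ}

lemma pow_le_norm_natCast (hp : p.Prime) (hpv : ‖(p : Kv)‖ < 1) (ht₀ : 0 ≤ t)
    (ht : t ^ (p - 1) = ‖(p : Kv)‖) {m e : ℕ} (hm : m ≠ 0)
    (he : (p - 1) * padicValNat p m ≤ e) : t ^ e ≤ ‖(m : Kv)‖ := by
  have ht₁ : t ≤ 1 :=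
    (pow_le_one_iff_of_nonneg ht₀ (Nat.sub_pos_of_lt hp.one_lt).ne').mp (ht.trans_le hpv.le)
  rw [norm_natCast_eq_pow_padicValNat hp hpv hm, ← ht, ← pow_mul]
  exact pow_le_pow_of_le_one ht₀ ht₁ he

lemma pow_le_norm_factorial (hp : p.Prime) (hpv : ‖(p : Kv)‖ < 1) (ht₀ : 0 ≤ t)
    (ht : t ^ (p - 1) = ‖(p : Kv)‖) (m : ℕ) : t ^ m ≤ ‖(m.factorial : Kv)‖ := by
  have := Fact.mk hp
  refine pow_le_norm_natCast hp hpv ht₀ ht m.factorial_ne_zero ?_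
  rw [sub_one_mul_padicValNat_factorial]
  exact Nat.sub_le _ _

lemma pow_le_norm_natCast_succ (hp : p.Prime) (hpv : ‖(p : Kv)‖ < 1) (ht₀ : 0 ≤ t)
    (ht : t ^ (p - 1) = ‖(p : Kv)‖) (j : ℕ) : t ^ j ≤ ‖((j + 1 : ℕ) : Kv)‖ := by
  have := Fact.mk hp
  refine pow_le_norm_natCast hp hpv ht₀ ht j.succ_ne_zero (Nat.le_of_lt_succ ?_)
  have hval : padicValNat p (j + 1) ≤ padicValNat p (j + 1).factorial :=
    (padicValNat_dvd_iff_le (Nat.factorial_ne_zero _)).mp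
      (pow_padicValNat_dvd.trans (Nat.dvd_factorial j.succ_pos le_rfl))
  exact (Nat.mul_le_mul_left (p - 1) hval).trans_lt
    (sub_one_mul_padicValNat_factorial_lt_of_ne_zero p j.succ_ne_zero)

lemma norm_choose_mul_pow_lt (hp : p.Prime) (hpv : ‖(p : Kv)‖ < 1) (ht₀ : 0 < t)
    (ht : t ^ (p - 1) = ‖(p : Kv)‖) {a : Kv} (ha : ‖a‖ < t) {m j : ℕ} (hm : m ≠ 0) (hj : j ≠ 0) :
    ‖(m.choose (j + 1) : Kv) * a ^ j‖ < ‖(m : Kv)‖ := by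
  obtain ⟨l, rfl⟩ := Nat.exists_eq_succ_of_ne_zero hm
  have hpow : ‖a ^ j‖ < ‖((j + 1 : ℕ) : Kv)‖ := by
    rw [norm_pow]
    exact (pow_lt_pow_left₀ ha (norm_nonneg a) hj).trans_le
      (pow_le_norm_natCast_succ hp hpv ht₀.le ht j)
  have hchoose : ‖((l + 1).choose (j + 1) : Kv)‖ * ‖((j + 1 : ℕ) : Kv)‖ ≤ ‖((l + 1 : ℕ) : Kv)‖ := by
    rw [← norm_mul, ← Nat.cast_mul, ← Nat.add_one_mul_choose_eq, Nat.cast_mul, norm_mul]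
    exact mul_le_of_le_one_right (norm_nonneg _) (IsUltrametricDist.norm_natCast_le_one Kv _)
  rw [norm_mul]
  rcases (norm_nonneg ((l + 1).choose (j + 1) : Kv)).eq_or_lt with hzero | hpos
  · rw [← hzero, zero_mul]
    exact (pow_pos ht₀ l).trans_le (pow_le_norm_natCast_succ hp hpv ht₀.le ht l)
  · exact (mul_lt_mul_of_pos_left hpow hpos).trans_le hchoose

theorem norm_qNat_eq_norm_natCast (hp : p.Prime) (hpv : ‖(p : Kv)‖ < 1) (ht₀ : 0 < t)
    (ht : t ^ (p - 1) = ‖(p : Kv)‖) {q : Kv} (hq : ‖q - 1‖ < t) (m : ℕ) :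
    ‖qNat q m‖ = ‖(m : Kv)‖ := by
  rcases eq_or_ne m 0 with rfl | hm
  · rw [qNat_zero, Nat.cast_zero]
  have hdominant := IsUltrametricDist.isNonarchimedean_norm.apply_sum_eq_of_lt
    (fun a => (norm_neg a).symm)
    (l := fun j => (m.choose (j + 1) : Kv) * (q - 1) ^ j)
    (Finset.mem_range.mpr (Nat.pos_of_ne_zero hm)) fun j _ hj => by
      simpa using norm_choose_mul_pow_lt hp hpv ht₀ ht hq hm hj
  simpa [qNat_eq_sum_choose] using hdominant

variable {q : Kv} {κ : ℕ}

lemma dvd_of_norm_one_sub_pow_lt_one (hq : ‖q‖ = 1)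
    (hκ : IsLeast {m : ℕ | 0 < m ∧ ‖1 - q ^ m‖ < 1} κ) {m : ℕ} (hm : ‖1 - q ^ m‖ < 1) :
    κ ∣ m := by
  have hdecomp : 1 - q ^ (m % κ) = (1 - q ^ m) + q ^ (m % κ) * ((q ^ κ) ^ (m / κ) - 1) := by
    have hpow : q ^ m = q ^ (m % κ) * (q ^ κ) ^ (m / κ) := by
      rw [← pow_mul, ← pow_add, Nat.mod_add_div]
    rw [hpow]
    ring
  have hmul : ‖q ^ (m % κ) * ((q ^ κ) ^ (m / κ) - 1)‖ < 1 := by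
    rw [norm_mul, norm_pow, hq, one_pow, one_mul]
    refine (norm_pow_sub_one_le ?_ _).trans_lt ?_
    · rw [norm_pow, hq, one_pow]
    · rw [norm_sub_rev]
      exact hκ.1.2
  have hlt : ‖1 - q ^ (m % κ)‖ < 1 :=
    hdecomp ▸ (IsUltrametricDist.norm_add_le_max _ _).trans_lt (max_lt hm hmul)
  refine Nat.dvd_of_mod_eq_zero (Nat.eq_zero_of_not_pos fun hpos => ?_)
  exact (hκ.2 ⟨hpos, hlt⟩).not_gt (Nat.mod_lt m hκ.1.1)

lemma norm_qNat_eq_one_of_not_dvd (hq : ‖q‖ = 1)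
    (hκ : IsLeast {m : ℕ | 0 < m ∧ ‖1 - q ^ m‖ < 1} κ) {m : ℕ} (hm : ¬κ ∣ m) :
    ‖qNat q m‖ = 1 := by
  refine (norm_qNat_le_one hq.le m).antisymm (not_lt.mp fun hlt => hm ?_)
  refine dvd_of_norm_one_sub_pow_lt_one hq hκ ?_
  rw [norm_sub_rev, ← qNat_mul_sub_one, norm_mul]
  exact (mul_le_of_le_one_right (norm_nonneg _) (norm_sub_one_le_one hq.le)).trans_lt hlt

theorem norm_qFactorial (hp : p.Prime) (hpv : ‖(p : Kv)‖ < 1) (ht₀ : 0 < t)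
    (ht : t ^ (p - 1) = ‖(p : Kv)‖) (hq : ‖q‖ = 1)
    (hκ : IsLeast {m : ℕ | 0 < m ∧ ‖1 - q ^ m‖ < 1} κ) (hκt : ‖1 - q ^ κ‖ < t) (N : ℕ) :
    ‖qFactorial q N‖ = ‖qNat q κ‖ ^ (N / κ) * ‖((N / κ).factorial : Kv)‖ := by
  induction N with
  | zero => simp [qFactorial_zero]
  | succ N ih =>
    rw [qFactorial_succ, norm_mul, ih]
    by_cases hdvd : κ ∣ N + 1
    · have hmul : N + 1 = κ * (N / κ + 1) := by
        rw [← Nat.succ_div_of_dvd hdvd, Nat.mul_div_cancel' hdvd]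
      have hqNat : ‖qNat q (N + 1)‖ = ‖qNat q κ‖ * ‖((N / κ + 1 : ℕ) : Kv)‖ := by
        rw [norm_sub_rev] at hκt
        rw [hmul, qNat_mul, norm_mul, norm_qNat_eq_norm_natCast hp hpv ht₀ ht hκt]
      rw [hqNat, Nat.succ_div_of_dvd hdvd, pow_succ, Nat.factorial_succ, Nat.cast_mul, norm_mul]
      ring
    · rw [norm_qNat_eq_one_of_not_dvd hq hκ hdvd, mul_one, Nat.succ_div_of_not_dvd hdvd]

theorem pow_le_norm_qFactorial (hp : p.Prime) (hpv : ‖(p : Kv)‖ < 1) (ht₀ : 0 < t)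
    (ht : t ^ (p - 1) = ‖(p : Kv)‖) (hq : ‖q‖ = 1)
    (hκ : IsLeast {m : ℕ | 0 < m ∧ ‖1 - q ^ m‖ < 1} κ) (hκt : ‖1 - q ^ κ‖ < t) (N : ℕ) :
    (‖qNat q κ‖ * t) ^ (N / κ) ≤ ‖qFactorial q N‖ := by
  rw [norm_qFactorial hp hpv ht₀ ht hq hκ hκt, mul_pow]
  exact mul_le_mul_of_nonneg_left (pow_le_norm_factorial hp hpv ht₀.le ht _)
    (pow_nonneg (norm_nonneg _) _)

end QFactorialNorm

section RootLimit

lemma ofReal_le_liminf_rpow_of_mul_pow_le {A C : ℝ} (hA : 0 < A) (hC : 0 < C) {u : ℕ → ℝ}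
    (hu : ∀ N, u N * A ^ N ≤ C) :
    ENNReal.ofReal A ≤ liminf (fun N : ℕ => ENNReal.ofReal (u N) ^ (-(1 / (N : ℝ)))) atTop := by
  have hlim : Tendsto (fun N : ℕ => ENNReal.ofReal (C ^ (-(1 / (N : ℝ))) * A)) atTop
      (nhds (ENNReal.ofReal A)) := by
    have hexp : Tendsto (fun N : ℕ => -(1 / (N : ℝ))) atTop (nhds 0) := by
      simpa using (tendsto_one_div_atTop_nhds_zero_nat (𝕜 := ℝ)).neg
    have hroot := (Real.continuousAt_const_rpow hC.ne').tendsto.comp hexp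
    exact ENNReal.tendsto_ofReal (by simpa using hroot.mul_const A)
  rw [← hlim.liminf_eq]
  refine liminf_le_liminf ?_
  filter_upwards [eventually_ge_atTop 1] with N hN
  have hN₀ : (N : ℝ) ≠ 0 := by positivity
  have hdiv : u N ≤ C / A ^ N := (le_div_iff₀ (pow_pos hA N)).mpr (hu N)
  have hroot : (C / A ^ N) ^ (-(1 / (N : ℝ))) = C ^ (-(1 / (N : ℝ))) * A := by
    rw [Real.div_rpow hC.le (pow_pos hA N).le, ← Real.rpow_natCast, ← Real.rpow_mul hA.le, mul_neg,
      mul_one_div_cancel hN₀, Real.rpow_neg_one, div_inv_eq_mul]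
  rw [← hroot, ← ENNReal.ofReal_rpow_of_pos (div_pos hC (pow_pos hA N)), ENNReal.rpow_neg,
    ENNReal.rpow_neg]
  exact ENNReal.inv_le_inv.mpr
    (ENNReal.rpow_le_rpow (ENNReal.ofReal_le_ofReal hdiv) (by positivity))

lemma ofReal_le_chiV {μ : ℕ} {q : Kv} {G : Matrix (Fin μ) (Fin μ) (RatFunc Kv)}
    (hqru : ∀ m : ℕ, 0 < m → q ^ m ≠ 1) {A C : ℝ} (hA₀ : 0 < A) (hA₁ : A ≤ 1) (hC : 0 < C)
    (hG : ∀ N, matGaussNorm (Gseq q G N) * A ^ N ≤ C * ‖qFactorial q N‖) :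
    ENNReal.ofReal A ≤ chiV q G := by
  refine le_min (ENNReal.ofReal_le_one.mpr hA₁)
    (ofReal_le_liminf_rpow_of_mul_pow_le hA₀ hC fun N => ?_)
  rw [div_mul_eq_mul_div, div_le_iff₀ (norm_pos_iff.mpr (qFactorial_ne_zero hqru N))]
  exact hG N

lemma rpow_div_le_pow_div {s : ℝ} (hs₀ : 0 < s) (hs₁ : s ≤ 1) (N k : ℕ) :
    s ^ ((N : ℝ) / k) ≤ s ^ (N / k) := by
  rw [← Real.rpow_natCast]
  exact Real.rpow_le_rpow_of_exponent_ge hs₀ hs₁ Nat.cast_div_le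

lemma pow_div_le_inv_mul_rpow_div {s : ℝ} (hs₀ : 0 < s) (hs₁ : s ≤ 1) (N : ℕ) {k : ℕ}
    (hk : 0 < k) : s ^ (N / k) ≤ s⁻¹ * s ^ ((N : ℝ) / k) := by
  rw [← Real.rpow_natCast, ← Real.rpow_neg_one, ← Real.rpow_add hs₀]
  refine Real.rpow_le_rpow_of_exponent_ge hs₀ hs₁ ?_
  have hfloor : N < (1 + N / k) * k := (Nat.div_lt_iff_lt_mul hk).mp (by lia)
  rw [neg_add_le_iff_le_add, div_le_iff₀ (by positivity)]
  exact_mod_cast hfloor.le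

lemma pow_div_mul_rpow_pow_le {s t : ℝ} (hs₀ : 0 < s) (hs₁ : s ≤ 1) (ht₀ : 0 < t) (ht₁ : t ≤ 1)
    {n κ : ℕ} (hn : 0 < n) (hκ : 0 < κ) (N : ℕ) :
    s ^ (N / (n * κ)) * (s ^ (((n : ℝ) - 1) / (n * κ)) * t ^ (1 / (κ : ℝ))) ^ N ≤
      s⁻¹ * (s * t) ^ (N / κ) := by
  have hexp : s ^ ((N : ℝ) / (n * κ : ℕ)) *
      (s ^ (((n : ℝ) - 1) / (n * κ)) * t ^ (1 / (κ : ℝ))) ^ N = (s * t) ^ ((N : ℝ) / κ) := by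
    rw [mul_pow, ← Real.rpow_mul_natCast hs₀.le, ← Real.rpow_mul_natCast ht₀.le, ← mul_assoc,
      ← Real.rpow_add hs₀, Real.mul_rpow hs₀.le ht₀.le]
    push_cast
    congr 2
    · field_simp
      ring
    · ring
  calc _ ≤ s⁻¹ * s ^ ((N : ℝ) / (n * κ : ℕ)) *
        (s ^ (((n : ℝ) - 1) / (n * κ)) * t ^ (1 / (κ : ℝ))) ^ N :=
        mul_le_mul_of_nonneg_right
          (pow_div_le_inv_mul_rpow_div hs₀ hs₁ N (Nat.mul_pos hn hκ)) (by positivity)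
    _ = s⁻¹ * (s * t) ^ ((N : ℝ) / κ) := by rw [mul_assoc, hexp]
    _ ≤ s⁻¹ * (s * t) ^ (N / κ) := mul_le_mul_of_nonneg_left
        (rpow_div_le_pow_div (mul_pos hs₀ ht₀) (mul_le_one₀ hs₁ ht₀.le ht₁) N κ) (by positivity)

end RootLimit

theorem q_chi_unipotent_mod_one_sub_q_pow_kappa_general [IsUltrametricDist Kv] {p : ℕ}
    (hp : p.Prime) (hpv : ‖(p : Kv)‖ < 1) {q : Kv} (hq : ‖q‖ = 1)
    (hqru : ∀ m : ℕ, 0 < m → q ^ m ≠ 1) {κ : ℕ}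
    (hκ : IsLeast {m : ℕ | 0 < m ∧ ‖1 - q ^ m‖ < 1} κ)
    (hdw : ‖1 - q ^ κ‖ < ‖(p : Kv)‖ ^ ((1 : ℝ) / ((p : ℝ) - 1))) {μ : ℕ}
    {G : Matrix (Fin μ) (Fin μ) (RatFunc Kv)} (hG : matGaussNorm G ≤ 1) {n : ℕ} (hn : 1 ≤ n)
    (hred : matGaussNorm (Gseq q G (n * κ)) ≤ ‖qNat q κ‖) :
    ENNReal.ofReal (‖qNat q κ‖ ^ (((n : ℝ) - 1) / ((n : ℝ) * (κ : ℝ))) *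
        ‖(p : Kv)‖ ^ ((1 : ℝ) / ((κ : ℝ) * ((p : ℝ) - 1)))) ≤
      chiV q G := by
  set s := ‖qNat q κ‖
  set t := ‖(p : Kv)‖ ^ ((1 : ℝ) / ((p : ℝ) - 1)) with ht
  have hp₁ : (0 : ℝ) < (p : ℝ) - 1 := sub_pos.mpr (mod_cast hp.one_lt)
  have hs₀ : 0 < s := norm_pos_iff.mpr (qNat_ne_zero hqru hκ.1.1)
  have hs₁ : s ≤ 1 := norm_qNat_le_one hq.le κ
  have ht₀ : 0 < t := (norm_nonneg _).trans_lt hdw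
  have ht₁ : t ≤ 1 := Real.rpow_le_one (norm_nonneg _) hpv.le (one_div_pos.mpr hp₁).le
  have ht_pow : t ^ (p - 1) = ‖(p : Kv)‖ := by
    rw [ht, ← Real.rpow_mul_natCast (norm_nonneg _), Nat.cast_pred hp.pos,
      one_div_mul_cancel hp₁.ne', Real.rpow_one]
  have ht_root : ‖(p : Kv)‖ ^ ((1 : ℝ) / ((κ : ℝ) * ((p : ℝ) - 1))) = t ^ (1 / (κ : ℝ)) := by
    rw [ht, ← Real.rpow_mul (norm_nonneg _), one_div_mul_one_div_rev]
  have hGseq (N : ℕ) : matGaussNorm (Gseq q G N) ≤ s ^ (N / (n * κ)) :=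
    matGaussNorm_Gseq_le_pow hq hqru hG (mul_comm n κ ▸ norm_qNat_mul_le hq.le κ n) hred N
  rw [ht_root]
  refine ofReal_le_chiV hqru (by positivity) ?_ (inv_pos.mpr hs₀) fun N => ?_
  · have hn₁ : (0 : ℝ) ≤ (n : ℝ) - 1 := sub_nonneg.mpr (mod_cast hn)
    exact mul_le_one₀ (Real.rpow_le_one hs₀.le hs₁ (by positivity)) (by positivity)
      (Real.rpow_le_one ht₀.le ht₁ (by positivity))
  calc _ ≤ s ^ (N / (n * κ)) * _ := mul_le_mul_of_nonneg_right (hGseq N) (by positivity)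
    _ ≤ s⁻¹ * (s * t) ^ (N / κ) := pow_div_mul_rpow_pow_le hs₀ hs₁ ht₀ ht₁ hn hκ.1.1 N
    _ ≤ s⁻¹ * ‖qFactorial q N‖ := mul_le_mul_of_nonneg_left
        (pow_le_norm_qFactorial hp hpv ht₀ ht_pow hq hκ hdw N) (inv_pos.mpr hs₀).le

/-- Lower bound for χ_v under unipotent reduction modulo 1 - q^κ of order n. -/
theorem q_chi_unipotent_mod_one_sub_q_pow_kappa
    {Kv : Type*} [NontriviallyNormedField Kv] [CompleteSpace Kv]
    (hna : ∀ x y : Kv, ‖x + y‖ ≤ max ‖x‖ ‖y‖)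
    (p : ℕ) (hp : Nat.Prime p) (hpv : ‖(p : Kv)‖ < 1)
    (q : Kv) (hq1 : ‖q‖ = 1) (hqru : ∀ m : ℕ, 0 < m → q ^ m ≠ 1)
    (κ : ℕ) (hκpos : 0 < κ) (hκlt : ‖1 - q ^ κ‖ < 1)
    (hκmin : ∀ m : ℕ, 0 < m → ‖1 - q ^ m‖ < 1 → κ ≤ m)
    (hdw : ‖1 - q ^ κ‖ < ‖(p : Kv)‖ ^ ((1 : ℝ) / ((p : ℝ) - 1)))
    (μ : ℕ) (G : Matrix (Fin μ) (Fin μ) (RatFunc Kv)) (hG1 : matGaussNorm G ≤ 1)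
    (n : ℕ) (hn : 1 ≤ n) (hred : matGaussNorm (Gseq q G (n * κ)) ≤ ‖qNat q κ‖) :
    ENNReal.ofReal (‖qNat q κ‖ ^ (((n : ℝ) - 1) / ((n : ℝ) * (κ : ℝ))) *
        ‖(p : Kv)‖ ^ ((1 : ℝ) / ((κ : ℝ) * ((p : ℝ) - 1)))) ≤
      chiV q G := by
  have := IsUltrametricDist.isUltrametricDist_of_forall_norm_add_le_max_norm hna
  exact q_chi_unipotent_mod_one_sub_q_pow_kappa_general hp hpv hq1 hqru
    ⟨⟨hκpos, hκlt⟩, fun m hm => hκmin m hm.1 hm.2⟩ hdw hG1 hn hred
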